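/- (6-edge case) Let s be a splitting coloring of P = {1,…,14} with no monochromatic K₄, no monochromatic K_{4,3}, and no monochromatic K_{5,2}, and let c be the induced coloring on 7-element subsets of P. Then for all 7-element subsets X, Y of P with |X ∩ Y| = 6 (so c(XY) = r) and every triple (r, j, k) ∈ M₂, there exists a 7-element subset Z of P, distinct from X and Y, with c(XZ) = j and c(YZ) = k. -/

import Mathlib

/-- The three colors: red `r` and the two blues `b0`, `b1`. -/
inductive Color where
  | r : Color
  | b0 : Color
  | b1 : Color
  deriving DecidableEq

/-- `M₂ = L³ \ {b₀,b₁}³`: the triples of colors that are not all blue. -/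
def M2 (t : Color × Color × Color) : Prop :=
  ¬ ((t.1 = Color.b0 ∨ t.1 = Color.b1) ∧ (t.2.1 = Color.b0 ∨ t.2.1 = Color.b1) ∧
     (t.2.2 = Color.b0 ∨ t.2.2 = Color.b1))

/-!
The color of an edge `XZ` is decided by the trace `X ∩ Z`. There are at least six points outside
`X ∪ Y`, so any nonempty `A ⊆ X ∪ Y` with fewer than seven points extends to a seven-point set `Z`
which meets `X ∪ Y` exactly in `A`, and it suffices to choose `A`. With `x ∈ X \ Y`, and with `p`,
`q` in `X ∩ Y` joined by the required blue, which exist because four points of `X ∩ Y` joined only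
by the other blue would be a monochromatic `K₄`, the choices are: three points of `X ∩ Y` for
red/red, `{x, p, q}` for red/blue, `{p, q}` for the same blue twice, and `{x}` for `b₁`/`b₀`.
Exchanging `X` and `Y` gives the remaining cases.
-/

variable {α : Type*}

/-- `s` has no monochromatic `K_m`, in any of the three colors. -/
def NoMonochromaticClique (s : α → α → Color) (m : ℕ) : Prop :=
  ¬ ∃ (b : Color) (W : Finset α), W.card = m ∧ ∀ i ∈ W, ∀ j ∈ W, i ≠ j → s i j = b

theorem NoMonochromaticClique.exists_pair_eq {s : α → α → Color} {m : ℕ} {T : Finset α} {b : Color}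
    (hK : NoMonochromaticClique s m) (hsblue : ∀ i j, i ≠ j → s i j = Color.b0 ∨ s i j = Color.b1)
    (hT : m ≤ T.card) (hb : b ≠ Color.r) : ∃ p ∈ T, ∃ q ∈ T, p ≠ q ∧ s p q = b := by
  by_contra! hne
  obtain ⟨W, hWT, hW⟩ := Finset.exists_subset_card_eq hT
  cases b with
  | r => exact hb rfl
  | b0 =>
    exact hK ⟨Color.b1, W, hW, fun i hi j hj hij ↦
      (hsblue i j hij).resolve_left (hne i (hWT hi) j (hWT hj) hij)⟩
  | b1 =>
    exact hK ⟨Color.b0, W, hW, fun i hi j hj hij ↦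
      (hsblue i j hij).resolve_right (hne i (hWT hi) j (hWT hj) hij)⟩

/-- The need `(j, k)` of the edge `XY` is met: some `n`-element set other than `X` and `Y` is joined
to `X` in color `j` and to `Y` in color `k`. -/
def NeedMet (c : Finset α → Finset α → Color) (n : ℕ) (X Y : Finset α) (j k : Color) : Prop :=
  ∃ Z : Finset α, Z.card = n ∧ Z ≠ X ∧ Z ≠ Y ∧ c X Z = j ∧ c Y Z = k

theorem NeedMet.symm {c : Finset α → Finset α → Color} {n : ℕ} {X Y : Finset α} {j k : Color} :
    NeedMet c n X Y j k → NeedMet c n Y X k j :=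
  fun ⟨Z, hZ, hZX, hZY, hj, hk⟩ ↦ ⟨Z, hZ, hZY, hZX, hk, hj⟩

variable [DecidableEq α]

/-- `TraceColor s T a` says that the coloring induced by `s` gives color `a` to the pairs of sets
whose intersection is `T`. It is a relation because, unless `s` is symmetric, the color of a
two-element trace depends on the order in which its points are listed. -/
inductive TraceColor (s : α → α → Color) : Finset α → Color → Prop
  | empty : TraceColor s ∅ Color.b0
  | singleton (i : α) : TraceColor s {i} Color.b1
  | pair {i j : α} (hij : i ≠ j) : TraceColor s {i, j} (s i j)
  | red {T : Finset α} (hT : 3 ≤ T.card) : TraceColor s T Color.r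

/-- `c` is the coloring induced by `s` on the pairs of distinct `n`-element sets; nothing is
required of the other values of `c`. -/
def IsInducedColoring (s : α → α → Color) (n : ℕ) (c : Finset α → Finset α → Color) : Prop :=
  ∀ X Y T a, X.card = n → Y.card = n → X ≠ Y → X ∩ Y = T → TraceColor s T a → c X Y = a

theorem exists_card_eq_inter_eq {U W A : Finset α} {n : ℕ} (hUW : Disjoint U W) (hAU : A ⊆ U)
    (hAn : A.card ≤ n) (hn : n ≤ A.card + W.card) : ∃ Z : Finset α, Z.card = n ∧ U ∩ Z = A := by
  have hAW : n ≤ (A ∪ W).card := by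
    rwa [Finset.card_union_of_disjoint (hUW.mono_left hAU)]
  obtain ⟨Z, hAZ, hZ, hZn⟩ :=
    Finset.exists_subsuperset_card_eq Finset.subset_union_left hAn hAW
  refine ⟨Z, hZn, Finset.Subset.antisymm (fun a ha ↦ ?_) (Finset.subset_inter hAU hAZ)⟩
  obtain ⟨haU, haZ⟩ := Finset.mem_inter.1 ha
  exact (Finset.mem_union.1 (hZ haZ)).resolve_right (Finset.disjoint_left.1 hUW haU)

namespace IsInducedColoring

variable {s : α → α → Color} {n : ℕ} {c : Finset α → Finset α → Color} {X Y W : Finset α}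

theorem needMet_of_traceColor (hc : IsInducedColoring s n c) (hX : X.card = n) (hY : Y.card = n)
    (hW : Disjoint (X ∪ Y) W) (hWn : n ≤ W.card + 1) {A : Finset α} (hA : A ⊆ X ∪ Y)
    (hA₀ : A.Nonempty) (hAn : A.card < n) {j k : Color} (hj : TraceColor s (X ∩ A) j)
    (hk : TraceColor s (Y ∩ A) k) : NeedMet c n X Y j k := by
  obtain ⟨Z, hZ, hZA⟩ := exists_card_eq_inter_eq hW hA hAn.le (by have := hA₀.card_pos; omega)
  have hXZ : X ∩ Z = X ∩ A := by
    rw [← hZA, ← Finset.inter_assoc, Finset.inter_eq_left.2 Finset.subset_union_left]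
  have hYZ : Y ∩ Z = Y ∩ A := by
    rw [← hZA, ← Finset.inter_assoc, Finset.inter_eq_left.2 Finset.subset_union_right]
  have hne {V : Finset α} (hVZ : V ∩ Z = V ∩ A) : Z ≠ V := by
    rintro rfl
    have hZ_subset : Z ⊆ A := by rw [← Finset.inter_eq_left, ← hVZ, Finset.inter_self]
    exact (hAn.trans_le (hZ ▸ Finset.card_le_card hZ_subset)).false
  exact ⟨Z, hZ, hne hXZ, hne hYZ, hc X Z _ j hX hZ (hne hXZ).symm hXZ hj,
    hc Y Z _ k hY hZ (hne hYZ).symm hYZ hk⟩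

theorem needMet_red_red (hc : IsInducedColoring s n c) (hX : X.card = n) (hY : Y.card = n)
    (hW : Disjoint (X ∪ Y) W) (hWn : n ≤ W.card + 1) (hn : 3 < n) (hXY : 3 ≤ (X ∩ Y).card) :
    NeedMet c n X Y Color.r Color.r := by
  obtain ⟨T, hT, hT₃⟩ := Finset.exists_subset_card_eq hXY
  obtain ⟨hTX, hTY⟩ := Finset.subset_inter_iff.1 hT
  refine hc.needMet_of_traceColor hX hY hW hWn (hTX.trans Finset.subset_union_left)
    (Finset.card_pos.1 (by omega)) (by omega) ?_ ?_
  · rw [Finset.inter_eq_right.2 hTX]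
    exact .red hT₃.ge
  · rw [Finset.inter_eq_right.2 hTY]
    exact .red hT₃.ge

theorem needMet_red_pair (hc : IsInducedColoring s n c) (hX : X.card = n) (hY : Y.card = n)
    (hW : Disjoint (X ∪ Y) W) (hWn : n ≤ W.card + 1) (hn : 3 < n) {x p q : α}
    (hxX : x ∈ X) (hxY : x ∉ Y) (hp : p ∈ X ∩ Y) (hq : q ∈ X ∩ Y) (hpq : p ≠ q) :
    NeedMet c n X Y Color.r (s p q) := by
  obtain ⟨hpX, hpY⟩ := Finset.mem_inter.1 hp
  obtain ⟨hqX, hqY⟩ := Finset.mem_inter.1 hq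
  have hA : ({x, p, q} : Finset α) ⊆ X := by simp [Finset.insert_subset_iff, hxX, hpX, hqX]
  have hpqY : ({p, q} : Finset α) ⊆ Y := by simp [Finset.insert_subset_iff, hpY, hqY]
  have hA₃ : ({x, p, q} : Finset α).card = 3 := Finset.card_eq_three.2
    ⟨x, p, q, (ne_of_mem_of_not_mem hpY hxY).symm, (ne_of_mem_of_not_mem hqY hxY).symm, hpq, rfl⟩
  refine hc.needMet_of_traceColor hX hY hW hWn (hA.trans Finset.subset_union_left)
    (Finset.insert_nonempty _ _) (by omega) ?_ ?_
  · rw [Finset.inter_eq_right.2 hA]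
    exact .red hA₃.ge
  · rw [Finset.inter_insert_of_notMem hxY, Finset.inter_eq_right.2 hpqY]
    exact .pair hpq

theorem needMet_pair_pair (hc : IsInducedColoring s n c) (hX : X.card = n) (hY : Y.card = n)
    (hW : Disjoint (X ∪ Y) W) (hWn : n ≤ W.card + 1) (hn : 2 < n) {p q : α}
    (hp : p ∈ X ∩ Y) (hq : q ∈ X ∩ Y) (hpq : p ≠ q) : NeedMet c n X Y (s p q) (s p q) := by
  have hA : ({p, q} : Finset α) ⊆ X ∩ Y := by
    rw [Finset.insert_subset_iff, Finset.singleton_subset_iff]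
    exact ⟨hp, hq⟩
  obtain ⟨hAX, hAY⟩ := Finset.subset_inter_iff.1 hA
  refine hc.needMet_of_traceColor hX hY hW hWn (hAX.trans Finset.subset_union_left)
    (Finset.insert_nonempty _ _) (by rwa [Finset.card_pair hpq]) ?_ ?_
  · rw [Finset.inter_eq_right.2 hAX]
    exact .pair hpq
  · rw [Finset.inter_eq_right.2 hAY]
    exact .pair hpq

theorem needMet_b1_b0 (hc : IsInducedColoring s n c) (hX : X.card = n) (hY : Y.card = n)
    (hW : Disjoint (X ∪ Y) W) (hWn : n ≤ W.card + 1) (hn : 1 < n) {x : α}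
    (hxX : x ∈ X) (hxY : x ∉ Y) : NeedMet c n X Y Color.b1 Color.b0 := by
  refine hc.needMet_of_traceColor hX hY hW hWn (A := {x})
    (Finset.singleton_subset_iff.2 (Finset.mem_union_left Y hxX)) (Finset.singleton_nonempty x)
    (by rwa [Finset.card_singleton]) ?_ ?_
  · rw [Finset.inter_singleton_of_mem hxX]
    exact .singleton x
  · rw [Finset.inter_singleton_of_notMem hxY]
    exact .empty

end IsInducedColoring

theorem six_edge_needs_met_general {s : α → α → Color} {m n : ℕ}
    {c : Finset α → Finset α → Color} {X Y W : Finset α}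
    (hsblue : ∀ i j, i ≠ j → s i j = Color.b0 ∨ s i j = Color.b1)
    (hK : NoMonochromaticClique s m) (hc : IsInducedColoring s n c)
    (hX : X.card = n) (hY : Y.card = n) (hXY : (X ∩ Y).card < n) (h3 : 3 ≤ (X ∩ Y).card)
    (hm : m ≤ (X ∩ Y).card) (hW : Disjoint (X ∪ Y) W) (hWn : n ≤ W.card + 1) (j k : Color) :
    NeedMet c n X Y j k := by
  have hn : 3 < n := h3.trans_lt hXY
  have hW' : Disjoint (Y ∪ X) W := by rwa [Finset.union_comm]
  obtain ⟨x, hxX, hxY⟩ : ∃ x ∈ X, x ∉ Y :=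
    Finset.not_subset.1 fun h ↦ hXY.ne (by rw [Finset.inter_eq_left.2 h, hX])
  obtain ⟨y, hyY, hyX⟩ : ∃ y ∈ Y, y ∉ X :=
    Finset.not_subset.1 fun h ↦ hXY.ne (by rw [Finset.inter_eq_right.2 h, hY])
  have exists_pair {b : Color} (hb : b ≠ Color.r) := hK.exists_pair_eq hsblue hm hb
  rcases eq_or_ne j k with rfl | hjk
  · rcases eq_or_ne j Color.r with rfl | hj
    · exact hc.needMet_red_red hX hY hW hWn hn h3
    · obtain ⟨p, hp, q, hq, hpq, rfl⟩ := exists_pair hj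
      exact hc.needMet_pair_pair hX hY hW hWn (by omega) hp hq hpq
  · rcases eq_or_ne j Color.r with rfl | hj
    · obtain ⟨p, hp, q, hq, hpq, rfl⟩ := exists_pair hjk.symm
      exact hc.needMet_red_pair hX hY hW hWn hn hxX hxY hp hq hpq
    rcases eq_or_ne k Color.r with rfl | hk
    · obtain ⟨p, hp, q, hq, hpq, rfl⟩ := exists_pair hj
      rw [Finset.inter_comm] at hp hq
      exact (hc.needMet_red_pair hY hX hW' hWn hn hyY hyX hp hq hpq).symm
    have hb10 := hc.needMet_b1_b0 hX hY hW hWn (by omega) hxX hxY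
    have hb01 := (hc.needMet_b1_b0 hY hX hW' hWn (by omega) hyY hyX).symm
    cases j <;> cases k <;> first | contradiction | assumption

/-- (6-edge case) For 7-element subsets `X`, `Y` with `|X ∩ Y| = 6` (so `c(XY) = r`),
every need `(r, j, k) ∈ M₂` of the edge `XY` has a witness: a 7-element subset `Z`,
distinct from `X` and `Y`, with `c(XZ) = j` and `c(YZ) = k`. -/
theorem six_edge_needs_met
    -- `s` is a splitting coloring: symmetric with values in {b₀, b₁}
    (s : Fin 14 → Fin 14 → Color)
    (hssym : ∀ i j : Fin 14, i ≠ j → s i j = s j i)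
    (hsblue : ∀ i j : Fin 14, i ≠ j → s i j = Color.b0 ∨ s i j = Color.b1)
    -- `s` has no monochromatic K₄
    (hK4 : ¬ ∃ (b : Color) (W : Finset (Fin 14)), W.card = 4 ∧
      ∀ i ∈ W, ∀ j ∈ W, i ≠ j → s i j = b)
    -- `s` has no monochromatic K_{4,3}
    (hK43 : ¬ ∃ (b : Color) (A B : Finset (Fin 14)), Disjoint A B ∧ A.card = 4 ∧ B.card = 3 ∧
      ∀ i ∈ A, ∀ j ∈ B, s i j = b)
    -- `s` has no monochromatic K_{5,2}
    (hK52 : ¬ ∃ (b : Color) (A B : Finset (Fin 14)), Disjoint A B ∧ A.card = 5 ∧ B.card = 2 ∧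
      ∀ i ∈ A, ∀ j ∈ B, s i j = b)
    -- `c` is the coloring on 7-element subsets induced by `s`
    (c : Finset (Fin 14) → Finset (Fin 14) → Color)
    (hc0 : ∀ X Y : Finset (Fin 14), X.card = 7 → Y.card = 7 →
      (X ∩ Y).card = 0 → c X Y = Color.b0)
    (hc1 : ∀ X Y : Finset (Fin 14), X.card = 7 → Y.card = 7 →
      (X ∩ Y).card = 1 → c X Y = Color.b1)
    (hc2 : ∀ X Y : Finset (Fin 14), X.card = 7 → Y.card = 7 → ∀ i j : Fin 14, i ≠ j →
      X ∩ Y = {i, j} → c X Y = s i j)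
    (hcr : ∀ X Y : Finset (Fin 14), X.card = 7 → Y.card = 7 → X ≠ Y →
      3 ≤ (X ∩ Y).card → c X Y = Color.r)
    :
    ∀ X Y : Finset (Fin 14), X.card = 7 → Y.card = 7 → (X ∩ Y).card = 6 →
      ∀ j k : Color, M2 (Color.r, j, k) →
      ∃ Z : Finset (Fin 14), Z.card = 7 ∧ Z ≠ X ∧ Z ≠ Y ∧ c X Z = j ∧ c Y Z = k := by
  intro X Y hX hY hXY j k _
  have hc : IsInducedColoring s 7 c := by
    intro X Y T a hX hY hne hT ha
    cases ha with
    | empty => exact hc0 X Y hX hY (by rw [hT, Finset.card_empty])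
    | singleton i => exact hc1 X Y hX hY (by rw [hT, Finset.card_singleton])
    | pair hij => exact hc2 X Y hX hY _ _ hij hT
    | red hT₃ => exact hcr X Y hX hY hne (by rwa [hT])
  have hU : (X ∪ Y)ᶜ.card = 6 := by
    have := Finset.card_union_add_card_inter X Y
    rw [Finset.card_compl, Fintype.card_fin]
    omega
  exact six_edge_needs_met_general hsblue hK4 hc hX hY (by omega) (by omega) (by omega)
    disjoint_compl_right (by omega) j k
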